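/- Let D be an integer with D > (576 log 2)³ + 3 and σ, R > 0 with R² > σ²(D−1). Set s⋆ = √(R² − σ²(D−3)), ν² = σ⁴(D−3)/(2s⋆²), ν̄ = √(ν² + σ²), and C(D) = ((D−3)/2)^{(D−3)/2} e^{−(D−3)/2} / Γ((D−1)/2). Suppose 576 log(2) · σ² D^{2/3} ≤ s⋆² ≤ 3σ²D. Then the convolution [φ ∗ h](s) satisfies: (i) [φ ∗ h](s) ≥ (1/(64e²)) · C(D) · s⋆ν/σ² for all 0 ≤ s ≤ s⋆ + ν̄, and (ii) [φ ∗ h](s) ≥ (1/(64e)) · C(D) · (s⋆ν/σ²) · (ν̄/(s − s⋆)) · exp(−(s−s⋆)²/(2(ν²+σ²))) for all s⋆ + ν̄ ≤ s ≤ s⋆ + (1/12) σ (D−3)^{1/6}. -/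

import Mathlib

/-!
Write `k = (D - 3) / 2`, so that `t ^ k * exp (-t)` has its mode at `k` and the upper limit in
`hFun` at `s⋆` is exactly `k`. After rescaling to `σ = 1` (`gaussConv_scale`), put `S = s⋆`,
`N = ν`, `B = ν̄`, `p = (D - 3) ^ (1 / 6)`.

Near `s⋆`, keeping a slice of the integral and expanding the logarithm of the density at its mode
gives `h (S + u) ≳ C(D) * S * l * exp (-(u + l) ^ 2 / (2 * N ^ 2))` for every `l ≥ 0`
(`hFun_lower`); for `u + l` of order `p` the error in the exponent is bounded, because
`S ^ 2 ≤ 3 D`. In the convolution at `S + y`, only a window `v = y - u` is kept, with `u` in an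
interval of length `N / B` to the right of the minimiser `N ^ 2 * y / B ^ 2` of
`(y - u) ^ 2 / 2 + u ^ 2 / (2 * N ^ 2)`, whose minimum is `y ^ 2 / (2 * B ^ 2)`. With
`l = N * B / y` the exponent exceeds this minimum by at most `3` on the window
(`exponent_bound`), and the remaining constants fit into `1 / (64 e)` (`const_bound`).

Since `h` is even and decreasing in `|s|`, the same window works for every `0 ≤ s ≤ S + y`
(`conv_lower`): the first bound is the case `y = B`, the second the case `s = S + y`.
-/

open MeasureTheory

/-- `h(s) = (1/Γ((D-1)/2)) ∫₀^{max{0,(R²-s²)/(2σ²)}} t^((D-3)/2) e^(-t) dt`, the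
probability that a chi-square random variable with `D-1` degrees of freedom is at
most `(R² - s²)/σ²`. -/
noncomputable def hFun (D : ℕ) (σ R : ℝ) (s : ℝ) : ℝ :=
  (1 / Real.Gamma (((D : ℝ) - 1) / 2)) *
    ∫ t in (0 : ℝ)..(max 0 ((R ^ 2 - s ^ 2) / (2 * σ ^ 2))),
      t ^ (((D : ℝ) - 3) / 2) * Real.exp (-t)

/-- The centered Gaussian density with standard deviation `σ`. -/
noncomputable def gaussPdf (σ : ℝ) (v : ℝ) : ℝ :=
  (1 / (Real.sqrt (2 * Real.pi) * σ)) * Real.exp (-v ^ 2 / (2 * σ ^ 2))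

/-- Convolution `[φ ∗ f](t) = ∫ φ(v) f(t - v) dv` with the Gaussian density. -/
noncomputable def gaussConv (σ : ℝ) (f : ℝ → ℝ) (t : ℝ) : ℝ :=
  ∫ v : ℝ, gaussPdf σ v * f (t - v)

/-- `C(D) = ((D-3)/2)^((D-3)/2) e^(-(D-3)/2) / Γ((D-1)/2)`. -/
noncomputable def CofD (D : ℕ) : ℝ :=
  (((D : ℝ) - 3) / 2) ^ (((D : ℝ) - 3) / 2) * Real.exp (-(((D : ℝ) - 3) / 2)) /
    Real.Gamma (((D : ℝ) - 1) / 2)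

/-! ### Regularity and monotonicity of `h` -/

lemma integrand_continuous (k : ℝ) (hk : 0 ≤ k) :
    Continuous fun t : ℝ => t ^ k * Real.exp (-t) :=
  (Real.continuous_rpow_const hk).mul (by fun_prop)

lemma hFun_nonneg (D : ℕ) (hD : (1 : ℝ) < D) (σ R s : ℝ) : 0 ≤ hFun D σ R s := by
  unfold hFun
  have := Real.Gamma_pos_of_pos (s := ((D : ℝ) - 1) / 2) (by linarith)
  refine mul_nonneg (by positivity) (intervalIntegral.integral_nonneg (le_max_left _ _) ?_)
  intro t ht
  have := ht.1
  positivity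

lemma hFun_le_of_abs_le (D : ℕ) (hD : (3 : ℝ) < D) (σ R : ℝ) {w w' : ℝ} (h : |w| ≤ w') :
    hFun D σ R w' ≤ hFun D σ R w := by
  unfold hFun
  have := Real.Gamma_pos_of_pos (s := ((D : ℝ) - 1) / 2) (by linarith)
  have hc := integrand_continuous (((D : ℝ) - 3) / 2) (by linarith)
  refine mul_le_mul_of_nonneg_left ?_ (by positivity)
  have hsq : w ^ 2 ≤ w' ^ 2 := by
    rw [← sq_abs w]; gcongr
  refine intervalIntegral.integral_mono_interval le_rfl (le_max_left _ _) ?_ ?_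
    (hc.intervalIntegrable _ _)
  · gcongr
  · refine (ae_restrict_mem measurableSet_Ioc).mono fun t ht => ?_
    have := ht.1
    simp only [Pi.zero_apply]
    positivity

lemma hFun_continuous (D : ℕ) (hD : (3 : ℝ) < D) (σ R : ℝ) : Continuous (hFun D σ R) := by
  unfold hFun
  have hc := integrand_continuous (((D : ℝ) - 3) / 2) (by linarith)
  have := intervalIntegral.continuous_primitive (μ := volume)
    (fun a b => hc.intervalIntegrable a b) 0
  refine continuous_const.mul (this.comp ?_)
  fun_prop

lemma gaussPdf_integrable : Integrable (gaussPdf 1) := by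
  have h := (integrable_exp_neg_mul_sq (b := 1 / 2) (by norm_num)).const_mul
    (1 / (Real.sqrt (2 * Real.pi) * 1))
  refine h.congr (Filter.Eventually.of_forall fun v => ?_)
  simp only [gaussPdf]
  congr 2
  ring

lemma conv_integrable (D : ℕ) (hD : (3 : ℝ) < D) (R s : ℝ) :
    Integrable fun v => gaussPdf 1 v * hFun D 1 R (s - v) := by
  refine gaussPdf_integrable.mul_bdd (c := hFun D 1 R 0) ?_ ?_
  · exact ((hFun_continuous D hD 1 R).comp (by fun_prop)).aestronglyMeasurable
  · refine Filter.Eventually.of_forall fun v => ?_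
    rw [Real.norm_eq_abs, abs_of_nonneg (hFun_nonneg D (by linarith) _ _ _)]
    have h1 : hFun D 1 R (s - v) = hFun D 1 R |s - v| := by simp [hFun]
    rw [h1]
    exact hFun_le_of_abs_le D hD 1 R (by simp)

/-! ### Lower bound for `h` near `s⋆` -/

/-- Second-order lower bound for the density `t ^ k * exp (-t)` to the left of its mode `k`. -/
lemma density_lower {k a : ℝ} (hk : 0 < k) (ha : 0 ≤ a) (hak : a ≤ k / 2) :
    k ^ k * Real.exp (-k) * Real.exp (-(a ^ 2 / (2 * k)) - 2 * a ^ 3 / k ^ 2) ≤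
      (k - a) ^ k * Real.exp (-(k - a)) := by
  set z := a / k with hz
  have hz0 : 0 ≤ z := by positivity
  have hz1 : z ≤ 1 / 2 := by rw [hz, div_le_iff₀ hk]; linarith
  have ha' : a = z * k := by rw [hz]; field_simp
  have hlog := Real.abs_log_sub_add_sum_range_le (x := z) (by rw [abs_of_nonneg hz0]; linarith) 2
  rw [abs_of_nonneg hz0] at hlog
  simp only [Finset.sum_range_succ, Finset.sum_range_zero] at hlog
  norm_num at hlog
  have h3 : z ^ 3 / (1 - z) ≤ 2 * z ^ 3 := by
    rw [div_le_iff₀ (by linarith)]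
    nlinarith [pow_nonneg hz0 3]
  have h4 := (abs_le.mp hlog).1
  have hka : k - a = k * (1 - z) := by rw [ha']; ring
  have h5 : -z - z ^ 2 / 2 - 2 * z ^ 3 ≤ Real.log (1 - z) := by linarith
  rw [Real.rpow_def_of_pos hk, Real.rpow_def_of_pos (by linarith : 0 < k - a), hka,
    Real.log_mul hk.ne' (by linarith), ← Real.exp_add, ← Real.exp_add, ← Real.exp_add]
  apply Real.exp_le_exp.mpr
  have e1 : a ^ 2 / (2 * k) = k * (z ^ 2 / 2) := by rw [ha']; field_simp
  have e2 : 2 * a ^ 3 / k ^ 2 = k * (2 * z ^ 3) := by rw [ha']; field_simp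
  rw [e1, e2]
  nlinarith [mul_le_mul_of_nonneg_left h5 hk.le]

lemma density_mono {k t t' : ℝ} (hk : 0 < k) (ht : 0 < t) (htt : t ≤ t') (htk : t' ≤ k) :
    t ^ k * Real.exp (-t) ≤ t' ^ k * Real.exp (-t') := by
  have ht' : 0 < t' := ht.trans_le htt
  rw [Real.rpow_def_of_pos ht, Real.rpow_def_of_pos ht', ← Real.exp_add, ← Real.exp_add]
  apply Real.exp_le_exp.mpr
  have h1 := Real.one_sub_inv_le_log_of_pos (x := t' / t) (by positivity)
  rw [Real.log_div ht'.ne' ht.ne', inv_div] at h1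
  have h2 : t' - t ≤ k * (1 - t / t') := by
    have : k * (1 - t / t') = k / t' * (t' - t) := by field_simp
    rw [this]
    have h3 : 1 ≤ k / t' := by rw [le_div_iff₀ ht']; linarith
    nlinarith
  nlinarith

/-- Only the part of the defining integral between the limits belonging to `S + u + l` and
`S + u` is kept; it has length at least `S * l`, and the integrand there is at least its value
at the left endpoint. -/
lemma hFun_lower (D : ℕ) (hD : (3 : ℝ) < D) {R S u l a k : ℝ} (hS : 0 ≤ S)
    (hkD : k = ((D : ℝ) - 3) / 2)
    (hR : R ^ 2 = S ^ 2 + 2 * k) (hu : 0 ≤ u) (hl : 0 ≤ l)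
    (ha : a = S * (u + l) + (u + l) ^ 2 / 2) (hak : a ≤ k / 2) :
    CofD D * (S * l) * Real.exp (-(a ^ 2 / (2 * k)) - 2 * a ^ 3 / k ^ 2) ≤
      hFun D 1 R (S + u) := by
  have hk : 0 < k := by rw [hkD]; linarith
  have ha0 : 0 ≤ a := by rw [ha]; positivity
  have hG := Real.Gamma_pos_of_pos (s := ((D : ℝ) - 1) / 2) (by linarith)
  have hc := integrand_continuous k hk.le
  have hb : (R ^ 2 - (S + u) ^ 2) / (2 * 1 ^ 2) = k - (S * u + u ^ 2 / 2) := by rw [hR]; ring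
  set b := k - (S * u + u ^ 2 / 2) with hbdef
  have hlen : S * l ≤ b - (k - a) := by
    rw [hbdef, ha]; nlinarith [mul_nonneg hu hl, sq_nonneg l]
  have hbk : b ≤ k := by rw [hbdef]; nlinarith [mul_nonneg hS hu, sq_nonneg u]
  have hab : k - a ≤ b := by nlinarith [mul_nonneg hS hl]
  have hb0 : 0 ≤ b := by linarith
  unfold hFun CofD
  rw [← hkD, hb, max_eq_right hb0]
  have h1 : (∫ t in (k - a)..b, t ^ k * Real.exp (-t)) ≤
      ∫ t in (0 : ℝ)..b, t ^ k * Real.exp (-t) := by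
    refine intervalIntegral.integral_mono_interval (by linarith) hab le_rfl ?_
      (hc.intervalIntegrable _ _)
    refine (ae_restrict_mem measurableSet_Ioc).mono fun t ht => ?_
    have := ht.1
    simp only [Pi.zero_apply]
    positivity
  have h2 : (b - (k - a)) * ((k - a) ^ k * Real.exp (-(k - a))) ≤
      ∫ t in (k - a)..b, t ^ k * Real.exp (-t) := by
    have := intervalIntegral.integral_mono_on (μ := volume) hab
      (intervalIntegrable_const (c := (k - a) ^ k * Real.exp (-(k - a))))
      (hc.intervalIntegrable _ _)
      (fun t ht => density_mono hk (by linarith) ht.1 (ht.2.trans hbk))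
    rwa [intervalIntegral.integral_const, smul_eq_mul] at this
  have h3 := density_lower hk ha0 hak
  have h4 : (S * l) * (k ^ k * Real.exp (-k) *
      Real.exp (-(a ^ 2 / (2 * k)) - 2 * a ^ 3 / k ^ 2)) ≤
      (b - (k - a)) * ((k - a) ^ k * Real.exp (-(k - a))) :=
    mul_le_mul hlen h3 (by positivity) (by linarith)
  have h5 := mul_le_mul_of_nonneg_left (h4.trans (h2.trans h1)) (one_div_nonneg.mpr hG.le)
  refine le_trans (le_of_eq ?_) h5
  ring

/-! ### Exponents and constants -/

/-- Completing the square in `u`: the quadratic form `(y - u) ^ 2 / 2 + u ^ 2 / (2 * N ^ 2)` is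
`y ^ 2 / (2 * B ^ 2)` plus a square, and the shift of `u` by `l` costs a bounded amount. -/
lemma gaussian_exponent {N B y u l x : ℝ} (hN : 0 < N) (hB : 0 < B) (hBN : B ^ 2 = N ^ 2 + 1)
    (hBy : B ≤ y) (hu1 : N ^ 2 * y / B ^ 2 ≤ u) (hu2 : u ≤ N ^ 2 * y / B ^ 2 + N / B)
    (hl : l = N * B / y) (hx : x = u + l) :
    (y - u) ^ 2 / 2 + x ^ 2 / (2 * N ^ 2) ≤ y ^ 2 / (2 * B ^ 2) + 2.5 := by
  have hy : 0 < y := by linarith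
  have hl0 : 0 < l := by rw [hl]; positivity
  have hlN : l ≤ N := by
    rw [hl, div_le_iff₀ hy]; nlinarith
  have e3 : (y - u) ^ 2 / 2 + u ^ 2 / (2 * N ^ 2) =
      y ^ 2 / (2 * B ^ 2) + (u - N ^ 2 * y / B ^ 2) ^ 2 / (N / B) ^ 2 / 2 := by
    field_simp
    rw [hBN]
    ring
  have e4 : (u - N ^ 2 * y / B ^ 2) ^ 2 / (N / B) ^ 2 ≤ 1 := by
    rw [div_le_one (by positivity)]
    exact pow_le_pow_left₀ (by linarith) (by linarith) 2
  have e5 : x ^ 2 / (2 * N ^ 2) = u ^ 2 / (2 * N ^ 2) + u * l / N ^ 2 + l ^ 2 / N ^ 2 / 2 := by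
    rw [hx]; field_simp; ring
  have e6 : l ^ 2 / N ^ 2 ≤ 1 := by
    rw [div_le_one (by positivity)]; gcongr
  have e7 : u * l / N ^ 2 ≤ 1.5 := by
    have h1 : u * l / N ^ 2 ≤ (N ^ 2 * y / B ^ 2 + N / B) * l / N ^ 2 := by gcongr
    have h2 : (N ^ 2 * y / B ^ 2 + N / B) * l / N ^ 2 = N / B + 1 / y := by
      rw [hl]; field_simp
    have h3 : 1 / y ≤ 1 / B := by gcongr
    have h4 : N / B + 1 / B ≤ 1.5 := by
      rw [← add_div, div_le_iff₀ hB]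
      refine le_of_sq_le_sq ?_ (by positivity)
      rw [mul_pow, hBN]
      linarith [sq_nonneg (N - 1), sq_nonneg N]
    linarith
  linarith

lemma nu_sq_le {p S N : ℝ} (hp : 0 < p) (hSl : 396 * p ^ 4 ≤ S ^ 2)
    (hSN : 2 * S ^ 2 * N ^ 2 = p ^ 6) : 792 * N ^ 2 ≤ p ^ 2 := by
  have h1 := mul_le_mul_of_nonneg_right hSl (sq_nonneg N)
  have h2 : p ^ 4 * (792 * N ^ 2) ≤ p ^ 4 * p ^ 2 := by linarith
  exact le_of_mul_le_mul_left h2 (by positivity)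

/-- The Gaussian exponent at the point `u` of the window, together with the error terms of
`hFun_lower`, exceeds the minimal exponent `y ^ 2 / (2 * B ^ 2)` by at most `3`. -/
lemma exponent_bound {p S N B y u l x a : ℝ} (hp : 19.9 ≤ p) (hS : 0 < S) (hN : 0 < N)
    (hB : 0 < B) (hSl : 396 * p ^ 4 ≤ S ^ 2) (hSu : S ^ 2 ≤ 3 * p ^ 6 + 9)
    (hSN : 2 * S ^ 2 * N ^ 2 = p ^ 6) (hBN : B ^ 2 = N ^ 2 + 1) (hBy : B ≤ y)
    (hyp : y ≤ p / 12) (hu1 : N ^ 2 * y / B ^ 2 ≤ u) (hu2 : u ≤ N ^ 2 * y / B ^ 2 + N / B)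
    (hl : l = N * B / y) (hx : x = u + l) (ha : a = S * x + x ^ 2 / 2) :
    a ≤ p ^ 6 / 4 ∧
      (y - u) ^ 2 / 2 + a ^ 2 / p ^ 6 + 8 * a ^ 3 / p ^ 12 ≤ y ^ 2 / (2 * B ^ 2) + 3 := by
  have hp0 : 0 < p := by linarith
  have hy : 0 < y := by linarith
  have hNB : N ≤ B := by nlinarith
  have hB1 : 1 ≤ B := by nlinarith
  have hl0 : 0 < l := by rw [hl]; positivity
  have hlN : l ≤ N := by
    rw [hl, div_le_iff₀ hy]; nlinarith
  have hNp : N ≤ p / 28 := by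
    have h3 := nu_sq_le hp0 hSl hSN
    nlinarith
  have hm : N ^ 2 * y / B ^ 2 ≤ y := by
    rw [div_le_iff₀ (by positivity)]; nlinarith
  have hτ : N / B ≤ 1 := by rw [div_le_one hB]; exact hNB
  have hu0 : 0 ≤ u := le_trans (by positivity) hu1
  have hx0 : 0 < x := by linarith
  have hxp : x ≤ 0.17 * p := by linarith
  have hp2 : 396 ≤ p ^ 2 := by nlinarith
  have hp6 : 396 * p ^ 4 ≤ p ^ 6 := by nlinarith [pow_pos hp0 4]
  have hp4 : 396 * p ^ 2 ≤ p ^ 4 := by nlinarith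
  have hSp : S ≤ 1.74 * p ^ 3 := by
    refine le_of_sq_le_sq ?_ (by positivity)
    nlinarith
  have hSx : S * x ≤ 0.2958 * p ^ 4 := by
    calc S * x ≤ (1.74 * p ^ 3) * (0.17 * p) := by gcongr
      _ = 0.2958 * p ^ 4 := by ring
  have hxx : x ^ 2 ≤ 0.0289 * p ^ 2 := by
    calc x ^ 2 ≤ (0.17 * p) ^ 2 := by gcongr
      _ = _ := by ring
  have ha0 : 0 ≤ a := by rw [ha]; positivity
  have hap : a ≤ 0.297 * p ^ 4 := by rw [ha]; linarith
  refine ⟨by linarith [pow_pos hp0 4], ?_⟩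
  -- the cubic error of the density
  have e1 : 8 * a ^ 3 / p ^ 12 ≤ 0.22 := by
    rw [div_le_iff₀ (by positivity)]
    have : a ^ 3 ≤ (0.297 * p ^ 4) ^ 3 := by gcongr
    linarith [pow_pos hp0 12]
  -- the quadratic term, up to the curvature of `s ↦ s ^ 2`
  have e2 : a ^ 2 / p ^ 6 ≤ x ^ 2 / (2 * N ^ 2) + 0.02 := by
    have h1 : x ^ 2 / (2 * N ^ 2) = S ^ 2 * x ^ 2 / p ^ 6 := by
      rw [← hSN]; field_simp
    rw [h1, ← sub_le_iff_le_add', ← sub_div, div_le_iff₀ (by positivity)]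
    have h2 : S * x * x ^ 2 ≤ 0.2958 * p ^ 4 * (0.0289 * p ^ 2) := by gcongr
    have h3 : x ^ 2 * x ^ 2 ≤ 0.0289 * p ^ 2 * (0.0289 * p ^ 2) := by gcongr
    have h4 : a ^ 2 - S ^ 2 * x ^ 2 = S * x * x ^ 2 + x ^ 2 * x ^ 2 / 4 := by rw [ha]; ring
    rw [h4]
    linarith [pow_pos hp0 6, pow_pos hp0 4]
  have e3 := gaussian_exponent hN hB hBN hBy hu1 hu2 hl hx
  linarith

/-- The loss `N / B` stays bounded below because `S ^ 2` is at most about `3 * p ^ 6`; together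
with the loss `exp (-3)` in the exponent it is absorbed by the factor `64`. -/
lemma const_bound {p S N B : ℝ} (hp : 19.9 ≤ p) (hN : 0 < N) (hB : 0 < B)
    (hSu : S ^ 2 ≤ 3 * p ^ 6 + 9) (hSN : 2 * S ^ 2 * N ^ 2 = p ^ 6) (hBN : B ^ 2 = N ^ 2 + 1) :
    1 / (64 * Real.exp 1) ≤ (N / B) * (1 / Real.sqrt (2 * Real.pi)) * Real.exp (-3) := by
  have hp0 : 0 < p := by linarith
  have hNB : 0.377 ≤ N / B := by
    rw [le_div_iff₀ hB]
    refine le_of_sq_le_sq ?_ hN.le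
    have hp6 : (10 : ℝ) ^ 6 ≤ p ^ 6 := by gcongr; linarith
    have : p ^ 6 ≤ 2 * (3 * p ^ 6 + 9) * N ^ 2 := by
      rw [← hSN]; nlinarith [sq_nonneg N]
    have h6 : 1 / 6.01 ≤ N ^ 2 := by
      have : p ^ 6 * 1 ≤ p ^ 6 * (6.01 * N ^ 2) := by nlinarith [sq_nonneg N]
      have := le_of_mul_le_mul_left this (by positivity)
      linarith
    rw [mul_pow, hBN]
    linarith
  have hpi : Real.sqrt (2 * Real.pi) ≤ 2.51 := by
    rw [Real.sqrt_le_left (by norm_num)]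
    nlinarith [Real.pi_lt_d2]
  have hpi' : 1 / 2.51 ≤ 1 / Real.sqrt (2 * Real.pi) := by gcongr
  have hexp : 1 / (64 * Real.exp 1) ≤ 0.377 * (1 / 2.51) * Real.exp (-3) := by
    have h2 : Real.exp 2 = Real.exp 1 * Real.exp 1 := by rw [← Real.exp_add]; norm_num
    have h3 : Real.exp 3 = Real.exp 2 * Real.exp 1 := by rw [← Real.exp_add]; norm_num
    rw [Real.exp_neg, h3, div_le_iff₀ (by positivity)]
    have he := Real.exp_pos 1
    have : 0.377 * (1 / 2.51) * (Real.exp 2 * Real.exp 1)⁻¹ * (64 * Real.exp 1) =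
        0.377 * (1 / 2.51) * 64 / Real.exp 2 := by field_simp
    rw [this, le_div_iff₀ (by positivity), h2]
    nlinarith [Real.exp_one_lt_d9]
  exact hexp.trans (by gcongr)

/-! ### Lower bound for the convolution -/

/-- The common lower bound, for `σ = 1`. The window for the convolution variable `v` makes
`u = y - v` range over an interval of length `N / B` to the right of the point
`N ^ 2 * y / B ^ 2` where the Gaussian exponent is minimal. -/
lemma conv_lower (D : ℕ) (hD : (3 : ℝ) < D) {R p S N B y s : ℝ} (hp : 19.9 ≤ p)
    (hpD : p ^ 6 = (D : ℝ) - 3) (hR : R ^ 2 = S ^ 2 + ((D : ℝ) - 3)) (hS : 0 < S) (hN : 0 < N)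
    (hB : 0 < B) (hSl : 396 * p ^ 4 ≤ S ^ 2) (hSu : S ^ 2 ≤ 3 * p ^ 6 + 9)
    (hSN : 2 * S ^ 2 * N ^ 2 = p ^ 6) (hBN : B ^ 2 = N ^ 2 + 1) (hBy : B ≤ y)
    (hyp : y ≤ p / 12) (hs0 : 0 ≤ s) (hs : s ≤ S + y) :
    1 / (64 * Real.exp 1) * CofD D * (S * N) * (B / y) * Real.exp (-y ^ 2 / (2 * B ^ 2)) ≤
      gaussConv 1 (hFun D 1 R) s := by
  have hp0 : 0 < p := by linarith
  have hy : 0 < y := by linarith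
  have hC : 0 < CofD D := by
    have := Real.Gamma_pos_of_pos (s := ((D : ℝ) - 1) / 2) (by linarith)
    have : 0 < ((D : ℝ) - 3) / 2 := by linarith
    unfold CofD; positivity
  have hyS : y ≤ S := by
    refine le_of_sq_le_sq ?_ hS.le
    have : y ^ 2 ≤ (p / 12) ^ 2 := by gcongr
    have : 1 ≤ p ^ 2 := by nlinarith
    nlinarith
  set m := N ^ 2 * y / B ^ 2 with hm
  set K := CofD D * (S * (N * B / y)) * Real.exp (-y ^ 2 / (2 * B ^ 2) - 3) *
    (1 / Real.sqrt (2 * Real.pi)) with hK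
  have hm0 : 0 ≤ m := by positivity
  have hτ0 : 0 < N / B := by positivity
  have hpoint : ∀ v ∈ Set.Icc (y - m - N / B) (y - m), K ≤ gaussPdf 1 v * hFun D 1 R (s - v) := by
    rintro v ⟨hv1, hv2⟩
    obtain ⟨ha, he⟩ := exponent_bound (u := y - v) hp hS hN hB hSl hSu hSN hBN hBy hyp
      (by linarith) (by linarith) rfl rfl rfl
    set l := N * B / y with hl
    set a := S * (y - v + l) + (y - v + l) ^ 2 / 2 with hadef
    have h1 := hFun_lower D hD (R := R) (S := S) (u := y - v) (l := l) (a := a)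
      (k := ((D : ℝ) - 3) / 2) hS.le rfl (by rw [hR]; ring) (by linarith) (by positivity) rfl
      (by rw [← hpD]; linarith)
    have h2 : hFun D 1 R (S + (y - v)) ≤ hFun D 1 R (s - v) :=
      hFun_le_of_abs_le D hD 1 R (abs_le.mpr ⟨by linarith, by linarith⟩)
    have hφ : 0 < gaussPdf 1 v := by unfold gaussPdf; positivity
    refine le_trans ?_ (mul_le_mul_of_nonneg_left (h1.trans h2) hφ.le)
    rw [← hpD]
    have h3 : Real.exp (-y ^ 2 / (2 * B ^ 2) - 3) ≤ Real.exp (-v ^ 2 / (2 * 1 ^ 2)) *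
        Real.exp (-(a ^ 2 / (2 * (p ^ 6 / 2))) - 2 * a ^ 3 / (p ^ 6 / 2) ^ 2) := by
      rw [← Real.exp_add]
      apply Real.exp_le_exp.mpr
      have e1 : a ^ 2 / (2 * (p ^ 6 / 2)) = a ^ 2 / p ^ 6 := by congr 1; ring
      have e2 : 2 * a ^ 3 / (p ^ 6 / 2) ^ 2 = 8 * a ^ 3 / p ^ 12 := by field_simp; ring
      have e3 : -y ^ 2 / (2 * B ^ 2) = -(y ^ 2 / (2 * B ^ 2)) := by ring
      rw [e1, e2, e3]
      have e4 : (y - (y - v)) ^ 2 = v ^ 2 := by ring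
      rw [e4] at he
      linarith
    calc K ≤ CofD D * (S * l) * (Real.exp (-v ^ 2 / (2 * 1 ^ 2)) *
        Real.exp (-(a ^ 2 / (2 * (p ^ 6 / 2))) - 2 * a ^ 3 / (p ^ 6 / 2) ^ 2)) *
          (1 / Real.sqrt (2 * Real.pi)) := by rw [hK]; gcongr
      _ = _ := by unfold gaussPdf; ring
  have hint : (N / B) * K ≤ gaussConv 1 (hFun D 1 R) s := by
    have h1 : ∫ v, (Set.Icc (y - m - N / B) (y - m)).indicator (fun _ => K) v = (N / B) * K := by
      rw [integral_indicator measurableSet_Icc, setIntegral_const, Real.volume_real_Icc,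
        max_eq_left (by linarith), smul_eq_mul]
      ring
    rw [← h1]
    refine integral_mono ?_ (conv_integrable D hD R s) ?_
    · exact (integrable_indicator_iff measurableSet_Icc).mpr (by
        simp [integrableOn_const_iff])
    · intro v
      by_cases hv : v ∈ Set.Icc (y - m - N / B) (y - m)
      · simpa [hv] using hpoint v hv
      · simp only [hv, not_false_eq_true, Set.indicator_of_notMem]
        exact mul_nonneg (by unfold gaussPdf; positivity) (hFun_nonneg D (by linarith) _ _ _)
  refine le_trans ?_ hint
  have hconst := const_bound hp hN hB hSu hSN hBN
  have := mul_le_mul_of_nonneg_right hconst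
    (by positivity : 0 ≤ CofD D * (S * N) * (B / y) * Real.exp (-y ^ 2 / (2 * B ^ 2)))
  calc _ = 1 / (64 * Real.exp 1) *
        (CofD D * (S * N) * (B / y) * Real.exp (-y ^ 2 / (2 * B ^ 2))) := by ring
    _ ≤ _ := this
    _ = _ := by rw [hK, sub_eq_add_neg, Real.exp_add]; ring

/-- Rescaling to unit standard deviation. -/
lemma gaussConv_scale (D : ℕ) {σ : ℝ} (hσ : 0 < σ) (R s : ℝ) :
    gaussConv σ (hFun D σ R) s = gaussConv 1 (hFun D 1 (R / σ)) (s / σ) := by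
  have h1 : ∀ w, hFun D 1 (R / σ) (w / σ) = hFun D σ R w := by
    intro w
    have h0 : ((R / σ) ^ 2 - (w / σ) ^ 2) / (2 * 1 ^ 2) = (R ^ 2 - w ^ 2) / (2 * σ ^ 2) := by
      field_simp
    unfold hFun
    rw [h0]
  unfold gaussConv
  have h2 := Measure.integral_comp_mul_left (fun v => gaussPdf σ v * hFun D σ R (s - v)) σ
  rw [abs_of_pos (inv_pos.mpr hσ), smul_eq_mul, eq_comm, inv_mul_eq_iff_eq_mul₀ hσ.ne'] at h2
  rw [h2, ← integral_const_mul]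
  congr 1
  ext v
  have h3 : s / σ - v = (s - σ * v) / σ := by field_simp
  rw [h3, h1, ← mul_assoc]
  congr 1
  unfold gaussPdf
  have h4 : -(σ * v) ^ 2 / (2 * σ ^ 2) = -v ^ 2 / (2 * 1 ^ 2) := by field_simp
  rw [h4]
  field_simp

/-- **Lower bounds on `φ ∗ h`.**  With `s⋆ = √(R² - σ²(D-3))`,
`ν² = σ⁴(D-3)/(2s⋆²)`, `ν̄ = √(ν² + σ²)`, if `D > (576 log 2)³ + 3` and
`576 log 2 · σ² D^(2/3) ≤ s⋆² ≤ 3σ²D`, then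
(i) `[φ ∗ h](s) ≥ (1/(64e²)) C(D) s⋆ν/σ²` for `0 ≤ s ≤ s⋆ + ν̄`, and
(ii) `[φ ∗ h](s) ≥ (1/(64e)) C(D) (s⋆ν/σ²)(ν̄/(s - s⋆)) exp(-(s-s⋆)²/(2(ν²+σ²)))`
for `s⋆ + ν̄ ≤ s ≤ s⋆ + (1/12)σ(D-3)^(1/6)`. -/
theorem gauss_conv_h_lower_bounds (D : ℕ)
    (hD : (576 * Real.log 2) ^ 3 + 3 < (D : ℝ)) (σ R : ℝ)
    (hσ : 0 < σ) (hR : 0 < R) (hRD : σ ^ 2 * ((D : ℝ) - 1) < R ^ 2)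
    (sstar ν νbar : ℝ)
    (hsstar : sstar = Real.sqrt (R ^ 2 - σ ^ 2 * ((D : ℝ) - 3)))
    (hν : ν = Real.sqrt (σ ^ 4 * ((D : ℝ) - 3) / (2 * sstar ^ 2)))
    (hνbar : νbar = Real.sqrt (ν ^ 2 + σ ^ 2))
    (hlow : 576 * Real.log 2 * σ ^ 2 * (D : ℝ) ^ ((2 : ℝ) / 3) ≤ sstar ^ 2)
    (hhigh : sstar ^ 2 ≤ 3 * σ ^ 2 * D) :
    (∀ s : ℝ, 0 ≤ s → s ≤ sstar + νbar →
      (1 / (64 * Real.exp 1 ^ 2)) * CofD D * (sstar * ν / σ ^ 2) ≤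
        gaussConv σ (hFun D σ R) s) ∧
    (∀ s : ℝ, sstar + νbar ≤ s →
      s ≤ sstar + (1 / 12) * σ * ((D : ℝ) - 3) ^ ((1 : ℝ) / 6) →
      (1 / (64 * Real.exp 1)) * CofD D * (sstar * ν / σ ^ 2) * (νbar / (s - sstar)) *
          Real.exp (-(s - sstar) ^ 2 / (2 * (ν ^ 2 + σ ^ 2))) ≤
        gaussConv σ (hFun D σ R) s) := by
  set n : ℝ := (D : ℝ) - 3 with hn
  have hlog : 399 < 576 * Real.log 2 := by linarith [Real.log_two_gt_d9]
  have hnbig : (399 : ℝ) ^ 3 < n := by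
    have : (399 : ℝ) ^ 3 < (576 * Real.log 2) ^ 3 := by gcongr
    linarith
  have hn0 : 0 < n := lt_trans (by norm_num) hnbig
  have hD3 : (3 : ℝ) < D := by linarith
  set p : ℝ := n ^ ((1 : ℝ) / 6) with hp
  have hp0 : 0 < p := Real.rpow_pos_of_pos hn0 _
  have hpn : p ^ 6 = n := by
    rw [hp, ← Real.rpow_natCast, ← Real.rpow_mul hn0.le]; norm_num
  have hp19 : 19.9 ≤ p := by
    by_contra! h
    have : p ^ 6 < 19.9 ^ 6 := by gcongr
    rw [hpn] at this
    norm_num at this hnbig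
    linarith
  have hpD : p ^ 4 ≤ (D : ℝ) ^ ((2 : ℝ) / 3) := by
    have : p ^ 4 = n ^ ((2 : ℝ) / 3) := by
      rw [hp, ← Real.rpow_natCast, ← Real.rpow_mul hn0.le]; norm_num
    rw [this]
    exact Real.rpow_le_rpow hn0.le (by linarith) (by norm_num)
  have hσ2 : 0 < σ ^ 2 := by positivity
  have hrad : 0 < R ^ 2 - σ ^ 2 * n := by nlinarith
  have hs0 : 0 < sstar := by rw [hsstar]; exact Real.sqrt_pos.mpr hrad
  have hs2 : sstar ^ 2 = R ^ 2 - σ ^ 2 * n := by rw [hsstar, Real.sq_sqrt hrad.le]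
  have hν0 : 0 < ν := by rw [hν]; exact Real.sqrt_pos.mpr (by positivity)
  have hν2 : ν ^ 2 = σ ^ 4 * n / (2 * sstar ^ 2) := by rw [hν, Real.sq_sqrt (by positivity)]
  have hb0 : 0 < νbar := by rw [hνbar]; exact Real.sqrt_pos.mpr (by positivity)
  have hb2 : νbar ^ 2 = ν ^ 2 + σ ^ 2 := by rw [hνbar, Real.sq_sqrt (by positivity)]
  have hSl : 396 * p ^ 4 ≤ (sstar / σ) ^ 2 := by
    rw [div_pow, le_div_iff₀ hσ2]
    refine le_trans ?_ hlow
    have h1 : 396 * p ^ 4 ≤ 576 * Real.log 2 * (D : ℝ) ^ ((2 : ℝ) / 3) :=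
      mul_le_mul (by linarith) hpD (by positivity) (by linarith)
    nlinarith
  have hSu : (sstar / σ) ^ 2 ≤ 3 * p ^ 6 + 9 := by
    rw [div_pow, div_le_iff₀ hσ2, hpn, hn]
    linarith
  have hSN : 2 * (sstar / σ) ^ 2 * (ν / σ) ^ 2 = p ^ 6 := by
    rw [div_pow ν, hν2, hpn]; field_simp
  have hBN : (νbar / σ) ^ 2 = (ν / σ) ^ 2 + 1 := by
    rw [div_pow, hb2]; field_simp
  have hRS : (R / σ) ^ 2 = (sstar / σ) ^ 2 + n := by
    rw [div_pow sstar, hs2]; field_simp; ring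
  have key : ∀ Y s : ℝ, νbar ≤ Y → Y ≤ (1 / 12) * σ * p → 0 ≤ s → s ≤ sstar + Y →
      (1 / (64 * Real.exp 1)) * CofD D * (sstar * ν / σ ^ 2) * (νbar / Y) *
        Real.exp (-Y ^ 2 / (2 * (ν ^ 2 + σ ^ 2))) ≤ gaussConv σ (hFun D σ R) s := by
    intro Y s hY1 hY2 h0 h1
    have hY0 : 0 < Y := by linarith
    have h := conv_lower D hD3 (R := R / σ) (p := p) (S := sstar / σ) (N := ν / σ)
      (B := νbar / σ) (y := Y / σ) (s := s / σ) hp19 hpn hRS (by positivity) (by positivity)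
      (by positivity) hSl hSu hSN hBN (by gcongr)
      (by rw [div_le_iff₀ hσ]; linarith) (by positivity)
      (by rw [← add_div]; gcongr)
    rw [gaussConv_scale D hσ]
    refine le_trans (le_of_eq ?_) h
    have e1 : -(Y / σ) ^ 2 / (2 * (νbar / σ) ^ 2) = -Y ^ 2 / (2 * (ν ^ 2 + σ ^ 2)) := by
      rw [← hb2]; field_simp
    have e2 : νbar / σ / (Y / σ) = νbar / Y := by field_simp
    have e3 : sstar / σ * (ν / σ) = sstar * ν / σ ^ 2 := by field_simp
    rw [e1, e2, e3]
  -- `νbar` itself is an admissible deviation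
  have hbp : νbar ≤ (1 / 12) * σ * p := by
    have h1 : (νbar / σ) ^ 2 ≤ (p / 12) ^ 2 := by
      have h2 := nu_sq_le hp0 hSl hSN
      have h3 : (19.9 : ℝ) ^ 2 ≤ p ^ 2 := by gcongr
      rw [hBN, div_pow p]
      linarith
    have h4 := le_of_sq_le_sq h1 (by positivity)
    rw [div_le_iff₀ hσ] at h4
    linarith
  have hC : 0 < CofD D := by
    have := Real.Gamma_pos_of_pos (s := ((D : ℝ) - 1) / 2) (by linarith)
    have : 0 < ((D : ℝ) - 3) / 2 := by linarith
    unfold CofD; positivity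
  constructor
  · intro s h0 h1
    refine le_trans ?_ (key νbar s le_rfl hbp h0 h1)
    have e1 : -νbar ^ 2 / (2 * (ν ^ 2 + σ ^ 2)) = -(1 / 2) := by rw [← hb2]; field_simp
    have e2 : 1 / (64 * Real.exp 1 ^ 2) = 1 / (64 * Real.exp 1) * Real.exp (-1) := by
      rw [Real.exp_neg]; field_simp
    have e3 : Real.exp (-1) ≤ Real.exp (-(1 / 2)) := Real.exp_le_exp.mpr (by norm_num)
    rw [e1, e2, div_self hb0.ne']
    calc _ = 1 / (64 * Real.exp 1) * CofD D * (sstar * ν / σ ^ 2) * 1 * Real.exp (-1) := by ring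
      _ ≤ _ := by gcongr
  · intro s h1 h2
    exact key (s - sstar) s (by linarith) (by linarith) (by linarith) (by linarith)
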